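/- arXiv:1810.02793 — 2 statements merged into one kernel-verified Lean document; each statement's English description precedes it below -/
import Mathlib

section
/- For all octonions x and y, x·(conj(x)·y) = N(x)·y, i.e. the composition of left multiplication by x with left multiplication by conj(x) is scalar multiplication by the norm N(x) (the identity L_x L_{x̄} = (x,x)·Id). -/
/-!
For `x = (a, b)` and `y = (c, d)` the mixed terms of `x·(x̄·y)` cancel by associativity of the
quaternions, which leaves `(a ā c + c b̄ b, d ā a + b b̄ d)`. Since norms `ā a` are central, so, on
replacing `a` by `a + 1`, are traces `ā + a`; therefore `ā` commutes with `a`. Thus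
`a ā = ā a` and `b b̄ = b̄ b` are scalars, and their sum multiplies both components.
-/

/-- The octonions, realized via the Cayley–Dickson construction as pairs of
real quaternions. -/
abbrev Octonion : Type := Quaternion ℝ × Quaternion ℝ

/-- Cayley–Dickson multiplication: `(a,b)·(c,d) = (a c − d̄ b, d a + b c̄)`. -/
noncomputable def octMul (x y : Octonion) : Octonion :=
  (x.1 * y.1 - star y.2 * x.2, y.2 * x.1 + x.2 * star y.1)

/-- Octonionic conjugation: `conj (a,b) = (ā, −b)`. -/
noncomputable def octConj (x : Octonion) : Octonion := (star x.1, -x.2)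

/-- The octonionic norm: `N (a,b) = ‖a‖² + ‖b‖²` (sum of quaternionic
norm-squares). -/
noncomputable def octN (x : Octonion) : ℝ :=
  Quaternion.normSq x.1 + Quaternion.normSq x.2

/-- The product of the Cayley–Dickson double of `A`, in the convention of `octMul`; the double is
encoded as `A × A`. -/
def cayleyDicksonMul {A : Type*} [NonUnitalNonAssocRing A] [Star A] (x y : A × A) : A × A :=
  (x.1 * y.1 - star y.2 * x.2, y.2 * x.1 + x.2 * star y.1)

/-- The conjugation of the Cayley–Dickson double of `A`, encoded as `A × A`; it generalizes
`octConj`. -/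
def cayleyDicksonConj {A : Type*} [Neg A] [Star A] (x : A × A) : A × A :=
  (star x.1, -x.2)

theorem cayleyDicksonMul_cayleyDicksonMul_conj {A : Type*} [NonUnitalRing A] [StarRing A]
    (x y : A × A) :
    cayleyDicksonMul x (cayleyDicksonMul (cayleyDicksonConj x) y) =
      (x.1 * star x.1 * y.1 + y.1 * (star x.2 * x.2),
        y.2 * (star x.1 * x.1) + x.2 * star x.2 * y.2) := by
  ext1 <;>
    simp only [cayleyDicksonMul, cayleyDicksonConj, star_add, star_sub, star_mul, star_neg,
      star_star] <;>
    noncomm_ring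

theorem isStarNormal_of_star_mul_self_mem_center {A : Type*} [NonAssocRing A] [StarRing A]
    (h : ∀ a : A, star a * a ∈ Subring.center A) (a : A) : IsStarNormal a := by
  have trace_eq : star a + a = star (a + 1) * (a + 1) - star a * a - star 1 * 1 := by
    simp only [star_add, star_one, add_mul, mul_add, one_mul, mul_one]
    abel
  have trace_mem : star a + a ∈ Subring.center A :=
    trace_eq ▸ sub_mem (sub_mem (h (a + 1)) (h a)) (h 1)
  have trace_commute : Commute (star a + a) a := trace_mem.comm a
  exact ⟨by simpa only [add_sub_cancel_right] using trace_commute.sub_left (Commute.refl a)⟩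

theorem octonion_lmul_lmul_conj_general {R A : Type*} [CommSemiring R] [Ring A] [StarRing A]
    [Algebra R A] {N : A → R} (hN : ∀ a, star a * a = algebraMap R A (N a)) (x y : A × A) :
    cayleyDicksonMul x (cayleyDicksonMul (cayleyDicksonConj x) y) = (N x.1 + N x.2) • y := by
  have normal : ∀ a : A, IsStarNormal a :=
    isStarNormal_of_star_mul_self_mem_center fun a ↦
      hN a ▸ Subring.mem_center_iff.2 fun b ↦ (Algebra.commutes (N a) b).symm
  have mul_star_eq (a : A) : a * star a = algebraMap R A (N a) :=
    (normal a).star_comm_self.eq.symm.trans (hN a)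
  rw [cayleyDicksonMul_cayleyDicksonMul_conj]
  ext1 <;>
    simp only [hN, mul_star_eq, ← Algebra.commutes, ← Algebra.smul_def, ← add_smul, Prod.smul_fst,
      Prod.smul_snd]

/-- The identity `L_x L_x̄ = (x,x)·Id`: for all octonions `x` and `y`,
`x·(x̄·y) = N(x) • y`. -/
theorem octonion_lmul_lmul_conj (x y : Octonion) :
    octMul x (octMul (octConj x) y) = octN x • y :=
  octonion_lmul_lmul_conj_general Quaternion.star_mul_self x y
end

section
/- Each reference point α on the pseudo-sphere S^{3,4} gives a parallelization: let α and x be split octonions with N(α) = 1 and N(x) = 1, and for i ∈ {1,…,7} set tᵢ := (eᵢ·α)·(conj(α)·x). Then B(tᵢ, x) = 0 for each i, and B(tᵢ, tⱼ) = ηᵢⱼ for all i, j, where η = diag(1,1,1,−1,−1,−1,−1). -/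
/-- The split octonions, realized via the Cayley–Dickson construction as pairs
of real quaternions. -/
abbrev SplitOctonion : Type := Quaternion ℝ × Quaternion ℝ

/-- Cayley–Dickson multiplication for split octonions:
`(a,b)·(c,d) = (a c + d̄ b, d a + b c̄)`. -/
noncomputable def soMul (x y : SplitOctonion) : SplitOctonion :=
  (x.1 * y.1 + star y.2 * x.2, y.2 * x.1 + x.2 * star y.1)

/-- Split-octonionic conjugation: `conj (a,b) = (ā, −b)`. -/
noncomputable def soConj (x : SplitOctonion) : SplitOctonion := (star x.1, -x.2)

/-- The split-octonionic norm: `N (a,b) = ‖a‖² − ‖b‖²` (difference of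
quaternionic norm-squares). -/
noncomputable def soN (x : SplitOctonion) : ℝ :=
  Quaternion.normSq x.1 - Quaternion.normSq x.2

/-- The bilinear form associated with the split-octonionic norm. -/
noncomputable def soB (u v : SplitOctonion) : ℝ :=
  (soN (u + v) - soN u - soN v) / 2

/-- The seven imaginary units of the split octonions. -/
noncomputable def soUnit : Fin 7 → SplitOctonion :=
  ![((⟨0, 1, 0, 0⟩ : Quaternion ℝ), 0),
    ((⟨0, 0, 1, 0⟩ : Quaternion ℝ), 0),
    ((⟨0, 0, 0, 1⟩ : Quaternion ℝ), 0),
    (0, 1),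
    (0, (⟨0, 1, 0, 0⟩ : Quaternion ℝ)),
    (0, (⟨0, 0, 1, 0⟩ : Quaternion ℝ)),
    (0, (⟨0, 0, 0, 1⟩ : Quaternion ℝ))]

/-- The flat metric `η = diag(1,1,1,−1,−1,−1,−1)` of signature `(3,4)`. -/
def eta34 (i j : Fin 7) : ℝ :=
  if i = j then (if (i : ℕ) < 3 then 1 else -1) else 0

/-!
Right multiplication by `y` and by `conj y` are adjoint for `B`, and `x·(conj x·y) = N(x) y`.
Together these give `B(x·z, y·z) = N(z) B(x, y)`, so `u ↦ (u·α)·(conj α·x)` scales `B` by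
`N(α)² N(x)`. Moving the factor `conj α·x` across `B` turns `B((u·α)·(conj α·x), x)` into
`B(u·α, x·(conj x·α)) = N(x) B(u·α, α) = N(x) N(α) B(u, 1)`, which vanishes for imaginary `u`.
-/

open scoped Quaternion RealInnerProductSpace

theorem quaternion_re_mul_comm {R : Type*} [CommRing R] (p q : ℍ[R]) : (p * q).re = (q * p).re := by
  simp only [Quaternion.re_mul]
  ring

theorem soB_eq_inner_sub_inner (x y : SplitOctonion) : soB x y = ⟪x.1, y.1⟫ - ⟪x.2, y.2⟫ := by
  simp only [soB, soN, Prod.fst_add, Prod.snd_add, Quaternion.normSq_add, Quaternion.inner_def]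
  ring

theorem soB_self (x : SplitOctonion) : soB x x = soN x := by
  rw [soB_eq_inner_sub_inner, Quaternion.inner_self, Quaternion.inner_self, soN]

theorem soB_smul_right (r : ℝ) (x y : SplitOctonion) : soB x (r • y) = r * soB x y := by
  simp only [soB_eq_inner_sub_inner, Prod.smul_fst, Prod.smul_snd, inner_smul_right, mul_sub]

theorem soConj_soConj (x : SplitOctonion) : soConj (soConj x) = x := by
  simp only [soConj, star_star, neg_neg]

theorem soN_soConj (x : SplitOctonion) : soN (soConj x) = soN x := by
  simp only [soN, soConj, Quaternion.normSq_star, Quaternion.normSq_neg]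

theorem soConj_smul (r : ℝ) (x : SplitOctonion) : soConj (r • x) = r • soConj x := by
  ext1 <;>
    simp only [soConj, Prod.smul_fst, Prod.smul_snd, Quaternion.star_smul, smul_neg]

theorem soConj_soMul (x y : SplitOctonion) :
    soConj (soMul x y) = soMul (soConj y) (soConj x) := by
  ext1
  · simp only [soConj, soMul, star_add, star_mul, star_star, star_neg, neg_mul_neg]
  · simp only [soConj, soMul, star_star, neg_mul, neg_add]
    abel

-- The unit is `(1, 0)`; the literal `1 : SplitOctonion` is the unit `(1, 1)` of the product ring.
theorem soMul_one_left (x : SplitOctonion) : soMul (1, 0) x = x := by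
  simp only [soMul, one_mul, mul_zero, add_zero, mul_one, zero_mul]

theorem soMul_soConj_soMul (x y : SplitOctonion) :
    soMul x (soMul (soConj x) y) = soN x • y := by
  obtain ⟨a, b⟩ := x
  obtain ⟨c, d⟩ := y
  ext1
  · calc a * (star a * c + star d * -b) + star (d * star a + -b * star c) * b
        = a * star a * c - c * (star b * b) := by
          simp only [star_add, star_mul, star_neg, star_star]
          noncomm_ring
      _ = soN (a, b) • c := by
          rw [Quaternion.self_mul_star, Quaternion.star_mul_self, Quaternion.coe_mul_eq_smul,
            Quaternion.mul_coe_eq_smul, ← sub_smul, soN]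
  · calc (d * star a + -b * star c) * a + b * star (star a * c + star d * -b)
        = d * (star a * a) - b * star b * d := by
          simp only [star_add, star_mul, star_neg, star_star]
          noncomm_ring
      _ = soN (a, b) • d := by
          rw [Quaternion.self_mul_star, Quaternion.star_mul_self, Quaternion.coe_mul_eq_smul,
            Quaternion.mul_coe_eq_smul, ← sub_smul, soN]

theorem soMul_soMul_soConj (x y : SplitOctonion) :
    soMul (soMul x y) (soConj y) = soN y • x :=
  calc soMul (soMul x y) (soConj y)
      = soConj (soMul y (soMul (soConj y) (soConj x))) := by
        simp only [soConj_soMul, soConj_soConj]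
    _ = soN y • x := by rw [soMul_soConj_soMul, soConj_smul, soConj_soConj]

theorem soB_soMul_left (x y z : SplitOctonion) :
    soB (soMul x y) z = soB x (soMul z (soConj y)) := by
  obtain ⟨a, b⟩ := x
  obtain ⟨c, d⟩ := y
  obtain ⟨p, q⟩ := z
  have trace_fst : (star d * (b * star p)).re = (b * (star p * star d)).re := by
    rw [quaternion_re_mul_comm, mul_assoc]
  have trace_snd : (d * (a * star q)).re = (a * (star q * d)).re := by
    rw [quaternion_re_mul_comm, mul_assoc]
  simp only [soB_eq_inner_sub_inner, Quaternion.inner_def, soMul, soConj, star_add, star_mul,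
    star_neg, star_star, mul_add, add_mul, neg_mul, mul_neg, mul_assoc, Quaternion.re_add,
    Quaternion.re_neg]
  linear_combination trace_fst - trace_snd

theorem soB_soMul_soMul_right (x y z : SplitOctonion) :
    soB (soMul x z) (soMul y z) = soN z * soB x y := by
  rw [soB_soMul_left, soMul_soMul_soConj, soB_smul_right]

theorem soN_soMul (x y : SplitOctonion) : soN (soMul x y) = soN x * soN y := by
  rw [← soB_self, soB_soMul_soMul_right, soB_self, mul_comm]

theorem soB_one_right (x : SplitOctonion) : soB x (1, 0) = x.1.re := by
  simp only [soB_eq_inner_sub_inner, Quaternion.inner_def, star_one, mul_one, inner_zero_right,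
    sub_zero]

theorem soB_soUnit_one (i : Fin 7) : soB (soUnit i) (1, 0) = 0 := by
  rw [soB_one_right]
  fin_cases i <;> rfl

theorem soB_soUnit_soUnit (i j : Fin 7) : soB (soUnit i) (soUnit j) = eta34 i j := by
  simp only [soB_eq_inner_sub_inner, Quaternion.inner_def, Quaternion.re_mul, Quaternion.re_star,
    Quaternion.imI_star, Quaternion.imJ_star, Quaternion.imK_star]
  fin_cases i <;> fin_cases j <;> simp [soUnit, eta34]

/-- The parallelization of the pseudo-spheres with reference point `α`: it carries a vector `u` at
the unit `(1, 0)` to the vector `(u·α)·(ᾱ·x)` at `x`. -/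
noncomputable def soTransport (α x u : SplitOctonion) : SplitOctonion :=
  soMul (soMul u α) (soMul (soConj α) x)

theorem soB_soTransport_base (α x u : SplitOctonion) :
    soB (soTransport α x u) x = soN α * soN x * soB u (1, 0) :=
  calc soB (soTransport α x u) x
      = soB (soMul u α) (soMul x (soMul (soConj x) α)) := by
        rw [soTransport, soB_soMul_left, soConj_soMul, soConj_soConj]
    _ = soN x * soB (soMul u α) (soMul (1, 0) α) := by
        rw [soMul_soConj_soMul, soB_smul_right, soMul_one_left]
    _ = soN α * soN x * soB u (1, 0) := by
        rw [soB_soMul_soMul_right]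
        ring

theorem soB_soTransport_soTransport (α x u v : SplitOctonion) :
    soB (soTransport α x u) (soTransport α x v) = soN α ^ 2 * soN x * soB u v := by
  simp only [soTransport, soB_soMul_soMul_right, soN_soMul, soN_soConj]
  ring

theorem splitOctonion_parallelization_ref_general (α x : SplitOctonion)
    (t : Fin 7 → SplitOctonion)
    (ht : ∀ i, t i = soMul (soMul (soUnit i) α) (soMul (soConj α) x)) :
    (∀ i : Fin 7, soB (t i) x = 0) ∧
    (∀ i j : Fin 7, soB (t i) (t j) = soN α ^ 2 * soN x * eta34 i j) := by
  obtain rfl : t = soTransport α x ∘ soUnit := funext ht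
  refine ⟨fun i => ?_, fun i j => ?_⟩
  · rw [Function.comp_apply, soB_soTransport_base, soB_soUnit_one, mul_zero]
  · rw [Function.comp_apply, Function.comp_apply, soB_soTransport_soTransport, soB_soUnit_soUnit]

/-- Every reference point `α` on the pseudo-sphere `S^{3,4}` gives a
parallelization: if `N(α) = 1 = N(x)`, the vectors `tᵢ = (eᵢ·α)·(ᾱ·x)` are
orthogonal to `x` and form a Lorentz-orthonormal frame at `x`. -/
theorem splitOctonion_parallelization_ref (α x : SplitOctonion)
    (hα : soN α = 1) (hx : soN x = 1)
    (t : Fin 7 → SplitOctonion)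
    (ht : ∀ i, t i = soMul (soMul (soUnit i) α) (soMul (soConj α) x)) :
    (∀ i : Fin 7, soB (t i) x = 0) ∧
    (∀ i j : Fin 7, soB (t i) (t j) = eta34 i j) := by
  simpa only [hα, hx, one_pow, one_mul] using
    splitOctonion_parallelization_ref_general α x t ht
end
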